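/- In the calculus λ_S, the reset-lift axiom is validated by applicative bisimilarity: for all terms t0, t1 such that both sides are closed, ⟨(λx.t0) ⟨t1⟩⟩ ≈_app (λx.⟨t0⟩) ⟨t1⟩. -/

import Mathlib

namespace LambdaS

/-- Terms of the calculus λ_S: variables, λ-abstractions, applications,
the shift operator `S k.t`, and the reset delimiter `⟨t⟩`. -/
inductive Tm : Type
  | var : ℕ → Tm
  | lam : ℕ → Tm → Tm
  | app : Tm → Tm → Tm
  | shift : ℕ → Tm → Tm
  | reset : Tm → Tm
  deriving DecidableEq

/-- A variable fresh for a finite set of variables. -/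
def fresh (s : Finset ℕ) : ℕ := if h : s.Nonempty then s.max' h + 1 else 0

namespace Tm

/-- Free variables. -/
def fv : Tm → Finset ℕ
  | var x => {x}
  | lam x t => fv t \ {x}
  | app t u => fv t ∪ fv u
  | shift k t => fv t \ {k}
  | reset t => fv t

def size : Tm → ℕ
  | var _ => 1
  | lam _ t => size t + 1
  | app t u => size t + size u + 1
  | shift _ t => size t + 1
  | reset t => size t + 1

/-- Renaming of free occurrences of a variable (used for α-renaming with a
fresh target variable). -/
def rename : Tm → ℕ → ℕ → Tm
  | var w, y, z => if w = y then var z else var w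
  | lam w t, y, z => if w = y then lam w t else lam w (rename t y z)
  | app t u, y, z => app (rename t y z) (rename u y z)
  | shift w t, y, z => if w = y then shift w t else shift w (rename t y z)
  | reset t, y, z => reset (rename t y z)

theorem size_rename (t : Tm) (y z : ℕ) : size (rename t y z) = size t := by
  induction t generalizing y z with
  | var w => simp only [rename]; split <;> rfl
  | lam w t ih => simp only [rename]; split <;> simp [size, ih]
  | app t u iht ihu => simp [rename, size, iht, ihu]
  | shift w t ih => simp only [rename]; split <;> simp [size, ih]
  | reset t ih => simp [rename, size, ih]

/-- Capture-avoiding substitution `t{v/x}` of `v` for the free occurrences of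
`x` in `t`; bound variables are α-renamed when needed. -/
def subst : Tm → ℕ → Tm → Tm
  | var w, x, v => if w = x then v else var w
  | lam y t, x, v =>
      if y = x then lam y t
      else if y ∈ fv v then
        lam (fresh (fv v ∪ fv t ∪ {x}))
          (subst (rename t y (fresh (fv v ∪ fv t ∪ {x}))) x v)
      else lam y (subst t x v)
  | app t u, x, v => app (subst t x v) (subst u x v)
  | shift y t, x, v =>
      if y = x then shift y t
      else if y ∈ fv v then
        shift (fresh (fv v ∪ fv t ∪ {x}))
          (subst (rename t y (fresh (fv v ∪ fv t ∪ {x}))) x v)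
      else shift y (subst t x v)
  | reset t, x, v => reset (subst t x v)
termination_by t _ _ => size t
decreasing_by all_goals simp [size_rename, size] <;> omega

end Tm

/-- Values: variables and λ-abstractions. -/
inductive IsValue : Tm → Prop
  | var (x : ℕ) : IsValue (Tm.var x)
  | lam (x : ℕ) (t : Tm) : IsValue (Tm.lam x t)

/-- A term is closed if it has no free variables. -/
def Closed (t : Tm) : Prop := t.fv = ∅

/-- Pure evaluation contexts E ::= □ | v E | E t. -/
inductive ECtx : Type
  | hole : ECtx
  | appR : (v : Tm) → IsValue v → ECtx → ECtx
  | appL : ECtx → Tm → ECtx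

def ECtx.plug : ECtx → Tm → Tm
  | .hole, t => t
  | .appR v _ E, t => Tm.app v (E.plug t)
  | .appL E u, t => Tm.app (E.plug t) u

def ECtx.fv : ECtx → Finset ℕ
  | .hole => ∅
  | .appR v _ E => v.fv ∪ E.fv
  | .appL E u => E.fv ∪ u.fv

/-- Composition of pure contexts: `(E.comp E').plug t = E.plug (E'.plug t)`. -/
def ECtx.comp : ECtx → ECtx → ECtx
  | .hole, E' => E'
  | .appR v hv E, E' => .appR v hv (E.comp E')
  | .appL E u, E' => .appL (E.comp E') u

/-- Evaluation contexts F ::= □ | v F | F t | ⟨F⟩. -/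
inductive FCtx : Type
  | hole : FCtx
  | appR : (v : Tm) → IsValue v → FCtx → FCtx
  | appL : FCtx → Tm → FCtx
  | reset : FCtx → FCtx

def FCtx.plug : FCtx → Tm → Tm
  | .hole, t => t
  | .appR v _ F, t => Tm.app v (F.plug t)
  | .appL F u, t => Tm.app (F.plug t) u
  | .reset F, t => Tm.reset (F.plug t)

def FCtx.fv : FCtx → Finset ℕ
  | .hole => ∅
  | .appR v _ F => v.fv ∪ F.fv
  | .appL F u => F.fv ∪ u.fv
  | .reset F => F.fv

/-- The function `λx.⟨E[x]⟩` representing the captured delimited context `E`,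
where `x` is chosen fresh (in particular `x ∉ fv E`). -/
def contFun (E : ECtx) : Tm :=
  Tm.lam (fresh E.fv) (Tm.reset (E.plug (Tm.var (fresh E.fv))))

/-- Call-by-value reduction →_v of λ_S. -/
inductive Red : Tm → Tm → Prop
  | beta (F : FCtx) (x : ℕ) (t v : Tm) :
      IsValue v →
      Red (F.plug (Tm.app (Tm.lam x t) v)) (F.plug (t.subst x v))
  | capture (F : FCtx) (E : ECtx) (k : ℕ) (t : Tm) :
      Red (F.plug (Tm.reset (E.plug (Tm.shift k t))))
          (F.plug (Tm.reset (t.subst k (contFun E))))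
  | resetVal (F : FCtx) (v : Tm) :
      IsValue v →
      Red (F.plug (Tm.reset v)) (F.plug v)

/-- A stuck term: not a value and unable to reduce. -/
def Stuck (t : Tm) : Prop := ¬ IsValue t ∧ ∀ t', ¬ Red t t'

/-- Normal forms: values and stuck terms. -/
def NormalForm (t : Tm) : Prop := IsValue t ∨ Stuck t

/-- A control-stuck term has the form E[S k.t]. -/
def ControlStuck (t : Tm) : Prop :=
  ∃ (E : ECtx) (k : ℕ) (s : Tm), t = E.plug (Tm.shift k s)

/-- Evaluation: `t ⇓ t'` iff `t →_v* t'` and `t'` is a normal form. -/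
def Evals (t t' : Tm) : Prop := Relation.ReflTransGen Red t t' ∧ NormalForm t'

/-- `t` evaluates to some value. -/
def EvalsToValue (t : Tm) : Prop := ∃ v, Relation.ReflTransGen Red t v ∧ IsValue v

/-- `t` evaluates to some control-stuck term. -/
def EvalsToStuck (t : Tm) : Prop :=
  ∃ s, Relation.ReflTransGen Red t s ∧ ControlStuck s

/-- General contexts C ::= □ | λx.C | t C | C t | S k.C | ⟨C⟩. -/
inductive Ctx : Type
  | hole : Ctx
  | lam : ℕ → Ctx → Ctx
  | appL : Ctx → Tm → Ctx
  | appR : Tm → Ctx → Ctx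
  | shift : ℕ → Ctx → Ctx
  | reset : Ctx → Ctx

def Ctx.plug : Ctx → Tm → Tm
  | .hole, t => t
  | .lam x C, t => Tm.lam x (C.plug t)
  | .appL C u, t => Tm.app (C.plug t) u
  | .appR u C, t => Tm.app u (C.plug t)
  | .shift k C, t => Tm.shift k (C.plug t)
  | .reset C, t => Tm.reset (C.plug t)

def Ctx.fv : Ctx → Finset ℕ
  | .hole => ∅
  | .lam x C => C.fv \ {x}
  | .appL C u => C.fv ∪ u.fv
  | .appR u C => u.fv ∪ C.fv
  | .shift k C => C.fv \ {k}
  | .reset C => C.fv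

/-- Contextual equivalence ≈ for the relaxed semantics (on closed terms):
tests evaluation to values and evaluation to control-stuck terms in every
closed context. -/
def CtxEquiv (t0 t1 : Tm) : Prop :=
  ∀ C : Ctx, C.fv = ∅ →
    (EvalsToValue (C.plug t0) ↔ EvalsToValue (C.plug t1)) ∧
    (EvalsToStuck (C.plug t0) ↔ EvalsToStuck (C.plug t1))

/-- Contextual equivalence ≈_p for the original semantics: tests evaluation to
values of ⟨C[·]⟩ in every closed context C. -/
def CtxEquivP (t0 t1 : Tm) : Prop :=
  ∀ C : Ctx, C.fv = ∅ →
    (EvalsToValue (Tm.reset (C.plug t0)) ↔ EvalsToValue (Tm.reset (C.plug t1)))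

/-- Contextual equivalence ≈_E testing only with closed evaluation contexts. -/
def ECtxEquiv (t0 t1 : Tm) : Prop :=
  ∀ F : FCtx, F.fv = ∅ →
    (EvalsToValue (F.plug t0) ↔ EvalsToValue (F.plug t1)) ∧
    (EvalsToStuck (F.plug t0) ↔ EvalsToStuck (F.plug t1))

/-- Applicative simulation. -/
def IsAppSim (R : Tm → Tm → Prop) : Prop :=
  ∀ t0 t1, R t0 t1 →
    (∀ t0', Red t0 t0' →
      ∃ t1', Relation.ReflTransGen Red t1 t1' ∧ R t0' t1') ∧
    (∀ x t0', t0 = Tm.lam x t0' →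
      ∃ t1', Relation.ReflTransGen Red t1 (Tm.lam x t1') ∧
        ∀ v, IsValue v → Closed v → R (t0'.subst x v) (t1'.subst x v)) ∧
    (∀ (E0 : ECtx) (k : ℕ) (t0' : Tm), t0 = E0.plug (Tm.shift k t0') →
      ∃ (E1 : ECtx) (t1' : Tm),
        Relation.ReflTransGen Red t1 (E1.plug (Tm.shift k t1')) ∧
        ∀ E : ECtx, E.fv = ∅ →
          R (Tm.reset (t0'.subst k (contFun (E.comp E0))))
            (Tm.reset (t1'.subst k (contFun (E.comp E1)))))

/-- Applicative bisimulation. -/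
def IsAppBisim (R : Tm → Tm → Prop) : Prop :=
  IsAppSim R ∧ IsAppSim (fun a b => R b a)

/-- Applicative bisimilarity ≈_app: the largest applicative bisimulation. -/
def AppBisim (t0 t1 : Tm) : Prop := ∃ R, IsAppBisim R ∧ R t0 t1

/-- Simultaneous substitution (used only with closing substitutions mapping
variables to closed values, so no capture can occur). -/
def Tm.msubst : Tm → (ℕ → Tm) → Tm
  | .var x, σ => σ x
  | .lam x t, σ => Tm.lam x (t.msubst (Function.update σ x (Tm.var x)))
  | .app t u, σ => Tm.app (t.msubst σ) (u.msubst σ)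
  | .shift k t, σ => Tm.shift k (t.msubst (Function.update σ k (Tm.var k)))
  | .reset t, σ => Tm.reset (t.msubst σ)

/-- Open extension of a relation on closed terms: relate `t0σ` and `t1σ` for
every substitution σ mapping variables to closed values. -/
def OpenExt (R : Tm → Tm → Prop) (t0 t1 : Tm) : Prop :=
  ∀ σ : ℕ → Tm, (∀ x, IsValue (σ x) ∧ Closed (σ x)) →
    R (t0.msubst σ) (t1.msubst σ)

/-- ω := λx.x x. -/
def omegaTm : Tm := Tm.lam 0 (Tm.app (Tm.var 0) (Tm.var 0))

/-- Ω := ω ω, a diverging term. -/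
def OmegaTm : Tm := Tm.app omegaTm omegaTm


theorem plug_shift_not_value (E : ECtx) (k : ℕ) (s : Tm) : ¬ IsValue (E.plug (Tm.shift k s)) := by
  cases E <;> (intro h; simp only [ECtx.plug] at h; cases h)

theorem value_not_red {v t : Tm} (hv : IsValue v) : ¬ Red v t := by
  intro h
  cases h with
  | beta F => cases F <;> (simp only [FCtx.plug] at hv; cases hv)
  | capture F => cases F <;> (simp only [FCtx.plug] at hv; cases hv)
  | resetVal F => cases F <;> (simp only [FCtx.plug] at hv; cases hv)

theorem red_reset {s s' : Tm} (h : Red s s') : Red (Tm.reset s) (Tm.reset s') := by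
  cases h with
  | beta F x t v hv => exact Red.beta (.reset F) x t v hv
  | capture F E k t => exact Red.capture (.reset F) E k t
  | resetVal F v hv => exact Red.resetVal (.reset F) v hv

theorem red_appR {w s s' : Tm} (hw : IsValue w) (h : Red s s') :
    Red (Tm.app w s) (Tm.app w s') := by
  cases h with
  | beta F x t v hv => exact Red.beta (.appR w hw F) x t v hv
  | capture F E k t => exact Red.capture (.appR w hw F) E k t
  | resetVal F v hv => exact Red.resetVal (.appR w hw F) v hv

theorem red_reset_inv {p r : Tm} (h : Red (Tm.reset p) r) :
    (∃ p', Red p p' ∧ r = Tm.reset p') ∨ (IsValue p ∧ r = p) ∨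
      (ControlStuck p ∧ ∃ u, r = Tm.reset u) := by
  generalize hq : Tm.reset p = q at h
  cases h with
  | beta F x t v hv =>
    cases F <;> simp only [FCtx.plug, Tm.reset.injEq, reduceCtorEq] at hq
    subst hq
    exact Or.inl ⟨_, Red.beta _ x t v hv, rfl⟩
  | capture F E k t =>
    cases F <;> simp only [FCtx.plug, Tm.reset.injEq, reduceCtorEq] at hq
    · exact Or.inr (Or.inr ⟨⟨E, k, t, hq⟩, _, rfl⟩)
    · subst hq
      exact Or.inl ⟨_, Red.capture _ E k t, rfl⟩
  | resetVal F v hv =>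
    cases F <;> simp only [FCtx.plug, Tm.reset.injEq, reduceCtorEq] at hq
    · subst hq
      exact Or.inr (Or.inl ⟨hv, rfl⟩)
    · subst hq
      exact Or.inl ⟨_, Red.resetVal _ v hv, rfl⟩

theorem red_app_inv {x : ℕ} {t s r : Tm} (h : Red (Tm.app (Tm.lam x t) s) r) :
    (IsValue s ∧ r = t.subst x s) ∨ ∃ s', Red s s' ∧ r = Tm.app (Tm.lam x t) s' := by
  generalize hq : Tm.app (Tm.lam x t) s = q at h
  cases h with
  | beta F y u v hv =>
    cases F <;> simp only [FCtx.plug, Tm.app.injEq, Tm.lam.injEq, reduceCtorEq] at hq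
    · obtain ⟨⟨rfl, rfl⟩, rfl⟩ := hq
      exact Or.inl ⟨hv, rfl⟩
    · obtain ⟨rfl, rfl⟩ := hq
      exact Or.inr ⟨_, Red.beta _ y u v hv, rfl⟩
    · exact absurd (hq.1 ▸ Red.beta _ y u v hv) (value_not_red (IsValue.lam x t))
  | capture F E k u =>
    cases F <;> simp only [FCtx.plug, Tm.app.injEq, reduceCtorEq] at hq
    · obtain ⟨rfl, rfl⟩ := hq
      exact Or.inr ⟨_, Red.capture _ E k u, rfl⟩
    · exact absurd (hq.1 ▸ Red.capture _ E k u) (value_not_red (IsValue.lam x t))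
  | resetVal F v hv =>
    cases F <;> simp only [FCtx.plug, Tm.app.injEq, reduceCtorEq] at hq
    · obtain ⟨rfl, rfl⟩ := hq
      exact Or.inr ⟨_, Red.resetVal _ v hv, rfl⟩
    · exact absurd (hq.1 ▸ Red.resetVal _ v hv) (value_not_red (IsValue.lam x t))

/-- The arguments occurring in the bisimulation: values and delimited terms. -/
def Delim (s : Tm) : Prop := IsValue s ∨ ∃ u, s = Tm.reset u

theorem delim_red {s s' : Tm} (hs : Delim s) (h : Red s s') : Delim s' := by
  rcases hs with hv | ⟨u, rfl⟩
  · exact absurd h (value_not_red hv)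
  · rcases red_reset_inv h with ⟨p', _, rfl⟩ | ⟨hv, rfl⟩ | ⟨_, hu⟩
    · exact Or.inr ⟨_, rfl⟩
    · exact Or.inl hv
    · exact Or.inr hu

theorem delim_not_stuck {s : Tm} (hs : Delim s) : ¬ ControlStuck s := by
  rintro ⟨E, k, u, rfl⟩
  rcases hs with hv | ⟨w, hw⟩
  · exact plug_shift_not_value _ _ _ hv
  · cases E <;> simp [ECtx.plug] at hw

theorem app_not_stuck {x : ℕ} {t s : Tm} (hs : Delim s) :
    ¬ ControlStuck (Tm.app (Tm.lam x t) s) := by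
  rintro ⟨E, k, u, hE⟩
  cases E <;> simp only [ECtx.plug, Tm.app.injEq, reduceCtorEq] at hE
  · exact delim_not_stuck hs ⟨_, k, u, hE.2⟩
  · exact plug_shift_not_value _ k u (hE.1 ▸ IsValue.lam x t)

/-- The candidate bisimulation. -/
inductive Lift : Tm → Tm → Prop
  | refl (t : Tm) : Lift t t
  | lift (x : ℕ) (t s : Tm) : Delim s →
      Lift (Tm.reset (Tm.app (Tm.lam x t) s)) (Tm.app (Tm.lam x (Tm.reset t)) s)

theorem subst_reset (t : Tm) (x : ℕ) (v : Tm) :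
    (Tm.reset t).subst x v = Tm.reset (t.subst x v) := by
  simp [Tm.subst]

theorem lift_bisim : IsAppBisim Lift := by
  constructor
  · intro a b hab
    cases hab with
    | refl =>
      exact ⟨fun t' h => ⟨t', .single h, .refl _⟩,
        fun x t' h => ⟨t', h ▸ .refl, fun _ _ _ => .refl _⟩,
        fun E k t' h => ⟨E, t', h ▸ .refl, fun _ _ => .refl _⟩⟩
    | lift x t s hs =>
      refine ⟨fun r h => ?_, fun y r h => by simp at h, fun E k r h => ?_⟩
      · rcases red_reset_inv h with ⟨p', hp, rfl⟩ | ⟨hv, _⟩ | ⟨hc, _⟩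
        · rcases red_app_inv hp with ⟨hv, rfl⟩ | ⟨s', hs', rfl⟩
          · refine ⟨_, .single (Red.beta .hole x (Tm.reset t) s hv), ?_⟩
            rw [subst_reset]
            exact .refl _
          · exact ⟨_, .single (red_appR (.lam _ _) hs'), .lift x t s' (delim_red hs hs')⟩
        · cases hv
        · exact absurd hc (app_not_stuck hs)
      · cases E <;> simp [ECtx.plug] at h
  · intro a b hab
    cases hab with
    | refl =>
      exact ⟨fun t' h => ⟨t', .single h, .refl _⟩,
        fun x t' h => ⟨t', h ▸ .refl, fun _ _ _ => .refl _⟩,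
        fun E k t' h => ⟨E, t', h ▸ .refl, fun _ _ => .refl _⟩⟩
    | lift x t s hs =>
      refine ⟨fun r h => ?_, fun y r h => by simp at h, fun E k r h => ?_⟩
      · rcases red_app_inv h with ⟨hv, rfl⟩ | ⟨s', hs', rfl⟩
        · refine ⟨_, .single (Red.beta (.reset .hole) x t s hv), ?_⟩
          rw [subst_reset]
          exact .refl _
        · exact ⟨_, .single (red_reset (red_appR (.lam _ _) hs')),
            .lift x t s' (delim_red hs hs')⟩
      · exact absurd ⟨E, k, r, h⟩ (app_not_stuck hs)

/-- The reset-lift axiom is validated by applicative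
bisimilarity: `⟨(λx.t0) ⟨t1⟩⟩ ≈_app (λx.⟨t0⟩) ⟨t1⟩` whenever both sides are
closed. -/
theorem reset_lift_appBisim (x : ℕ) (t0 t1 : Tm)
    (h0 : Closed (Tm.reset (Tm.app (Tm.lam x t0) (Tm.reset t1))))
    (h1 : Closed (Tm.app (Tm.lam x (Tm.reset t0)) (Tm.reset t1))) :
    AppBisim (Tm.reset (Tm.app (Tm.lam x t0) (Tm.reset t1)))
             (Tm.app (Tm.lam x (Tm.reset t0)) (Tm.reset t1)) := by
  exact ⟨Lift, lift_bisim, .lift x t0 _ (Or.inr ⟨t1, rfl⟩)⟩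

end LambdaS
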